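/- For every d ∈ ℕ and every ρ > 0 there is a constant c (depending only on d and ρ) such that the following holds. Let n ∈ ℕ, let r > 0, set R = ρ·r, let x_1, …, x_n ∈ ℝ^d satisfy |x_i − x_j| ≥ 2R for all i ≠ j, and let p = (p_1, …, p_n) be a probability vector. Let μ = ∑_{i=1}^n p_i δ_{x_i}. Then H(μ * n_{r²}) ≥ d·log r + H(p) − c, where H(p) = ∑_{i=1}^n −p_i log p_i is the Shannon entropy of p. -/

import Mathlib

open MeasureTheory Real

/-- Density of the centered Gaussian on `ℝ^d` with covariance matrix `y • I`. -/
noncomputable def gaussD (d : ℕ) (y : ℝ) (x : EuclideanSpace ℝ (Fin d)) : ℝ :=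
  (2 * Real.pi * y) ^ (-(d : ℝ) / 2) * Real.exp (-‖x‖ ^ 2 / (2 * y))

/-- The differential entropy `H(μ * n_y) = ∫ -f log f` where `f` is the density of `μ * n_y`. -/
noncomputable def entG (d : ℕ) (μ : Measure (EuclideanSpace ℝ (Fin d))) (y : ℝ) : ℝ :=
  ∫ x, Real.negMulLog (∫ z, gaussD d y (x - z) ∂μ)

lemma aux_term {p K C w f : ℝ} (hp : 0 ≤ p) (hK : 0 < K) (hC : 0 < C) (hw : 0 < w) (hf : 0 < f) :
    (Real.negMulLog p - p * Real.log (K * C)) * (K * w) ≤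
      -(p * (K * w)) * Real.log f - p * (K * w) + w * (f / C) := by
  rcases hp.eq_or_lt with rfl | hp
  · simp; positivity
  have h := Real.log_le_sub_one_of_pos (x := f / C / (p * K)) (by positivity)
  rw [Real.log_div (by positivity) (by positivity), Real.log_div (by positivity) (by positivity),
    Real.log_mul (by positivity) (by positivity)] at h
  have h2 := mul_le_mul_of_nonneg_left h (a := p * (K * w)) (by positivity)
  have h3 : p * (K * w) * (f / C / (p * K) - 1) = w * (f / C) - p * (K * w) := by
    field_simp
  rw [h3] at h2
  rw [Real.log_mul (by positivity) (by positivity), Real.negMulLog]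
  nlinarith [h2]

lemma aux_lower {n : ℕ} {p w : Fin n → ℝ} {K C : ℝ} (hp : ∀ i, 0 ≤ p i) (hs : ∑ i, p i = 1)
    (hK : 0 < K) (hC : 0 < C) (hw : ∀ i, 0 < w i) (hW : ∑ i, w i ≤ C) :
    ∑ i, (Real.negMulLog (p i) - p i * Real.log (K * C)) * (K * w i) ≤
      Real.negMulLog (∑ i, p i * (K * w i)) := by
  set f := ∑ i, p i * (K * w i) with hf
  have hf0 : 0 < f := by
    apply Finset.sum_pos'
    · intro i _; have := hp i; have := hw i; positivity
    · by_contra! h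
      have : ∑ i, p i ≤ 0 := Finset.sum_nonpos (fun i _ => by
        by_contra! h2
        have := h i (Finset.mem_univ i)
        have := hw i
        have : 0 < p i * (K * w i) := by positivity
        linarith)
      linarith
  calc _ ≤ ∑ i, (-(p i * (K * w i)) * Real.log f - p i * (K * w i) + w i * (f / C)) :=
        Finset.sum_le_sum (fun i _ => aux_term (hp i) hK hC (hw i) hf0)
    _ = - f * Real.log f - f + (∑ i, w i) * (f / C) := by
        rw [Finset.sum_add_distrib, Finset.sum_sub_distrib, ← Finset.sum_mul, ← Finset.sum_mul,
          Finset.sum_neg_distrib]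
    _ ≤ _ := by
        have : (∑ i, w i) * (f / C) ≤ C * (f / C) := by gcongr
        rw [mul_div_cancel₀ _ hC.ne'] at this
        rw [Real.negMulLog]; linarith

lemma aux_upper {n : ℕ} {a : Fin n → ℝ} (ha : ∀ i, 0 ≤ a i) :
    Real.negMulLog (∑ i, a i) ≤ ∑ i, Real.negMulLog (a i) := by
  simp only [Real.negMulLog]
  rw [neg_mul, Finset.sum_mul, ← Finset.sum_neg_distrib]
  apply Finset.sum_le_sum
  intro i _
  rcases (ha i).eq_or_lt with h | h
  · simp [← h]
  have : a i ≤ ∑ i, a i := Finset.single_le_sum (fun i _ => ha i) (Finset.mem_univ i)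
  have := Real.log_le_log h this
  nlinarith

lemma aux_int (d : ℕ) {b : ℝ} (hb : 0 < b) (y : EuclideanSpace ℝ (Fin d)) :
    Integrable (fun x : EuclideanSpace ℝ (Fin d) => Real.exp (-b * ‖x - y‖ ^ 2)) := by
  have := (GaussianFourier.integrable_cexp_neg_mul_sq_norm_add (b := (b:ℂ)) (by simpa) 0
    (0 : EuclideanSpace ℝ (Fin d))).norm
  have h : Integrable (fun x : EuclideanSpace ℝ (Fin d) => Real.exp (-b * ‖x‖ ^ 2)) := by
    convert this using 2 with x
    rw [Complex.norm_exp]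
    congr 1
    simp [← Complex.ofReal_pow]
  exact h.comp_sub_right y

lemma aux_integral (d : ℕ) {b : ℝ} (hb : 0 < b) (y : EuclideanSpace ℝ (Fin d)) :
    ∫ x : EuclideanSpace ℝ (Fin d), Real.exp (-b * ‖x - y‖ ^ 2) = (π / b) ^ ((d:ℝ) / 2) := by
  rw [integral_sub_right_eq_self (fun x : EuclideanSpace ℝ (Fin d) => Real.exp (-b * ‖x‖ ^ 2)) y,
    GaussianFourier.integral_rexp_neg_mul_sq_norm hb]
  simp

lemma aux_int2 (d : ℕ) {b : ℝ} (hb : 0 < b) (y : EuclideanSpace ℝ (Fin d)) :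
    Integrable (fun x : EuclideanSpace ℝ (Fin d) =>
      Real.negMulLog (Real.exp (-b * ‖x - y‖ ^ 2))) := by
  refine ((aux_int d (half_pos hb) y).const_mul 2).mono' ?_ ?_
  · exact (Real.continuous_negMulLog.comp (by fun_prop)).aestronglyMeasurable
  · refine Filter.Eventually.of_forall (fun x => ?_)
    simp only [Real.negMulLog, Real.log_exp]
    set s := b * ‖x - y‖ ^ 2 with hs
    have hs0 : 0 ≤ s := by positivity
    have e1 : -b * ‖x - y‖ ^ 2 = -(s/2) + -(s/2) := by rw [hs]; ring
    have e2 : -(b/2) * ‖x - y‖ ^ 2 = -(s/2) := by rw [hs]; ring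
    rw [e1, e2, Real.exp_add, Real.norm_eq_abs, abs_of_nonneg]
    · have h1 : (s/2) * Real.exp (-(s/2)) ≤ 1 := by
        rw [Real.exp_neg, ← div_eq_mul_inv, div_le_one (Real.exp_pos _)]
        linarith [Real.add_one_le_exp (s/2)]
      nlinarith [Real.exp_pos (-(s/2))]
    · have := Real.exp_pos (-(s/2))
      nlinarith [mul_nonneg (mul_nonneg this.le this.le) hs0]

lemma aux_pack (d : ℕ) {ρ : ℝ} (hρ : 0 < ρ) : ∃ C : ℝ, 0 < C ∧ ∀ (n : ℕ)
    (y : Fin n → EuclideanSpace ℝ (Fin d)), (∀ i j, i ≠ j → 2 * ρ ≤ dist (y i) (y j)) →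
    ∑ i, Real.exp (-‖y i‖ ^ 2 / 2) ≤ C := by
  set v := volume.real (Metric.ball (0 : EuclideanSpace ℝ (Fin d)) ρ) with hv
  have hv0 : 0 < v := by
    apply ENNReal.toReal_pos (Metric.measure_ball_pos _ _ hρ).ne' measure_ball_lt_top.ne
  set G := fun x : EuclideanSpace ℝ (Fin d) => Real.exp (ρ^2/2) * Real.exp (-(1/4) * ‖x - 0‖ ^ 2)
    with hG
  have hGi : Integrable G := (aux_int d (by norm_num) 0).const_mul _
  have hGI : 0 < ∫ x, G x := by
    rw [hG, integral_const_mul, aux_integral d (by norm_num)]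
    positivity
  refine ⟨(∫ x, G x) / v, by positivity, fun n y hy => ?_⟩
  rw [le_div_iff₀ hv0, Finset.sum_mul]
  have hdisj : Pairwise (Function.onFun Disjoint fun i => Metric.ball (y i) ρ) := by
    intro i j hij
    exact Metric.ball_disjoint_ball (by linarith [hy i j hij])
  calc _ ≤ ∑ i, ∫ x in Metric.ball (y i) ρ, G x := by
        apply Finset.sum_le_sum
        intro i _
        have hvi : v = volume.real (Metric.ball (y i) ρ) := by
          rw [hv, Measure.real, Measure.real, Measure.addHaar_ball_center volume (y i)]
        have : Real.exp (-‖y i‖ ^ 2 / 2) * v =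
            ∫ x in Metric.ball (y i) ρ, Real.exp (-‖y i‖ ^ 2 / 2) := by
          rw [setIntegral_const, hvi, smul_eq_mul, mul_comm]
        rw [this]
        apply setIntegral_mono_on _ hGi.integrableOn measurableSet_ball
        · intro x hx
          rw [hG]
          simp only [sub_zero]
          rw [← Real.exp_add, Real.exp_le_exp]
          rw [Metric.mem_ball, dist_eq_norm] at hx
          have h1 : ‖x‖ ≤ ‖y i‖ + ‖x - y i‖ := by
            simpa using norm_add_le (y i) (x - y i)
          nlinarith [norm_nonneg x, norm_nonneg (y i), norm_nonneg (x - y i),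
            sq_nonneg (‖y i‖ - ‖x - y i‖), pow_le_pow_left₀ (norm_nonneg x) h1 2,
            pow_le_pow_left₀ (norm_nonneg (x - y i)) hx.le 2]
        · exact integrableOn_const (measure_ball_lt_top.ne)
    _ = ∫ x in ⋃ i, Metric.ball (y i) ρ, G x := by
        rw [integral_iUnion_fintype (fun i => measurableSet_ball) hdisj
          (fun i => hGi.integrableOn)]
    _ ≤ ∫ x, G x := by
        apply setIntegral_le_integral hGi
        exact Filter.Eventually.of_forall (fun x => by rw [hG]; positivity)

lemma aux_conv (d n : ℕ) (y : ℝ) (x : Fin n → EuclideanSpace ℝ (Fin d)) (p : Fin n → ℝ)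
    (hp : ∀ i, 0 ≤ p i) (u : EuclideanSpace ℝ (Fin d)) :
    ∫ z, gaussD d y (u - z) ∂(∑ i, ENNReal.ofReal (p i) • Measure.dirac (x i)) =
      ∑ i, p i * gaussD d y (u - x i) := by
  rw [integral_finsetSum_measure]
  · apply Finset.sum_congr rfl
    intro i _
    rw [integral_smul_measure, integral_dirac, ENNReal.toReal_ofReal (hp i), smul_eq_mul]
  · intro i _
    exact (integrable_dirac (by simp)).smul_measure (by simp)

theorem statement14 (d : ℕ) (ρ : ℝ) (hρ : 0 < ρ) :
    ∃ c : ℝ, ∀ (n : ℕ), 0 < n → ∀ (r : ℝ), 0 < r →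
      ∀ x : Fin n → EuclideanSpace ℝ (Fin d),
        (∀ i j, i ≠ j → 2 * (ρ * r) ≤ dist (x i) (x j)) →
      ∀ p : Fin n → ℝ, (∀ i, 0 ≤ p i) → ∑ i, p i = 1 →
        (d : ℝ) * Real.log r + (∑ i, Real.negMulLog (p i)) - c ≤
          entG d (∑ i, ENNReal.ofReal (p i) • Measure.dirac (x i)) (r ^ 2) := by
  obtain ⟨C, hC, hpack⟩ := aux_pack d hρ
  refine ⟨Real.log C - (d / 2) * Real.log (2 * π), ?_⟩
  intro n hn r hr x hx p hp hs
  set K : ℝ := (2 * π * r ^ 2) ^ (-(d : ℝ) / 2) with hKdef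
  have hK : 0 < K := by positivity
  set b : ℝ := 1 / (2 * r ^ 2) with hbdef
  have hb : 0 < b := by positivity
  have hg : ∀ u, gaussD d (r ^ 2) u = K * Real.exp (-b * ‖u‖ ^ 2) := by
    intro u
    rw [gaussD, hbdef]
    congr 2
    ring
  rw [entG]
  simp only [aux_conv d n (r ^ 2) x p hp]
  simp only [hg]
  have hW : ∀ u, ∑ i, Real.exp (-b * ‖u - x i‖ ^ 2) ≤ C := by
    intro u
    have := hpack n (fun i => r⁻¹ • (u - x i)) (fun i j hij => by
      rw [dist_smul₀, dist_sub_left, Real.norm_eq_abs, abs_of_pos (by positivity)]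
      rw [inv_mul_eq_div, le_div_iff₀ hr]
      linarith [hx i j hij])
    refine le_trans (le_of_eq ?_) this
    apply Finset.sum_congr rfl
    intro i _
    congr 1
    rw [norm_smul, Real.norm_eq_abs, abs_of_pos (by positivity), hbdef]
    field_simp
  set L := fun u => ∑ i, (Real.negMulLog (p i) - p i * Real.log (K * C)) *
    (K * Real.exp (-b * ‖u - x i‖ ^ 2)) with hL
  set U := fun u => ∑ i, Real.negMulLog (p i * (K * Real.exp (-b * ‖u - x i‖ ^ 2))) with hU
  set F := fun u => Real.negMulLog (∑ i, p i * (K * Real.exp (-b * ‖u - x i‖ ^ 2))) with hF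
  have hLF : ∀ u, L u ≤ F u := fun u =>
    aux_lower hp hs hK hC (fun i => Real.exp_pos _) (hW u)
  have hFU : ∀ u, F u ≤ U u := fun u => aux_upper (fun i => by have := hp i; positivity)
  have hLi : Integrable L :=
    integrable_finsetSum _ (fun i _ => ((aux_int d hb (x i)).const_mul _).const_mul _)
  have hUi : Integrable U := by
    refine integrable_finsetSum _ (fun i _ => ?_)
    simp only [← mul_assoc]
    simp only [Real.negMulLog_mul (p i * K)]
    exact ((aux_int d hb (x i)).mul_const _).add ((aux_int2 d hb (x i)).const_mul _)
  have hFi : Integrable F := by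
    refine (hLi.norm.add hUi.norm).mono' ?_ ?_
    · exact (Real.continuous_negMulLog.comp (by fun_prop)).aestronglyMeasurable
    · refine Filter.Eventually.of_forall (fun u => ?_)
      simp only [Pi.add_apply, Real.norm_eq_abs]
      rw [abs_le]
      constructor
      · linarith [hLF u, neg_abs_le (L u), abs_nonneg (U u)]
      · linarith [hFU u, le_abs_self (U u), abs_nonneg (L u)]
  refine le_trans (le_of_eq ?_) (integral_mono hLi hFi hLF)
  have hone : ∀ i, ∫ u, K * Real.exp (-b * ‖u - x i‖ ^ 2) = 1 := by
    intro i
    rw [integral_const_mul, aux_integral d hb, hKdef, hbdef]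
    rw [show π / (1 / (2 * r ^ 2)) = 2 * π * r ^ 2 by field_simp, ← Real.rpow_add (by positivity)]
    rw [show -(d:ℝ) / 2 + d / 2 = 0 by ring, Real.rpow_zero]
  rw [hL, integral_finsetSum _
    (fun i _ => ((aux_int d hb (x i)).const_mul _).const_mul _)]
  simp only [integral_const_mul _ (fun u => K * Real.exp (-b * ‖u - x _‖ ^ 2)), hone, mul_one]
  rw [Finset.sum_sub_distrib, ← Finset.sum_mul, hs, Real.log_mul hK.ne' hC.ne', hKdef,
    Real.log_rpow (by positivity), Real.log_mul (x := 2 * π) (y := r ^ 2) (by positivity) (by positivity), Real.log_pow]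
  push_cast
  ring
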